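/- arXiv:1704.04288 — 2 statements merged into one kernel-verified Lean document; each statement's English description precedes it below -/
import Mathlib

section
/- For every positive integer n, τ(n+1) ≤ τ(n) + 1. -/
/-- `(v+1, v)` (0-based values) is a separated pair of `π`. -/
def IsSepPair {n : ℕ} (π : Equiv.Perm (Fin n)) (v : Fin n) : Prop :=
  ∃ p q r : Fin n, p < q ∧ q < r ∧
    (π p : ℕ) = (v : ℕ) + 1 ∧ (v : ℕ) + 1 < (π q : ℕ) ∧ π r = v

/-- number of separated pairs of `π`. -/
noncomputable def sep {n : ℕ} (π : Equiv.Perm (Fin n)) : ℕ :=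
  {v : Fin n | IsSepPair π v}.ncard

/-- `tau n` is the maximum of `sep` over all permutations of length `n`. -/
noncomputable def tau (n : ℕ) : ℕ :=
  Finset.univ.sup fun π : Equiv.Perm (Fin n) => sep π

/-!
Delete the smallest value from `π` and close up positions and values. The relative order of the
remaining entries is preserved, and the smallest value is never the larger entry that separates a
pair. Hence every separated pair not containing the smallest value survives with its values lowered
by one, and at most one pair is lost.
-/

section EraseValue

variable {n : ℕ}

/-- The pattern of `π` obtained by deleting the entry with value `a`: the remaining positions and
the remaining values are each relabelled by `Fin n`, in increasing order. -/
def eraseValue (π : Equiv.Perm (Fin (n + 1))) (a : Fin (n + 1)) : Equiv.Perm (Fin n) :=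
  (finSuccAboveEquiv (π.symm a)).trans <|
    (π.subtypeEquiv fun x => (π.eq_symm_apply.not : x ≠ π.symm a ↔ π x ≠ a)).trans
      (finSuccAboveEquiv a).symm

theorem succAbove_eraseValue (π : Equiv.Perm (Fin (n + 1))) (a : Fin (n + 1)) (i : Fin n) :
    a.succAbove (eraseValue π a i) = π ((π.symm a).succAbove i) :=
  congrArg Subtype.val ((finSuccAboveEquiv a).apply_symm_apply _)

theorem exists_succ_eraseValue_eq {π : Equiv.Perm (Fin (n + 1))} {a x : Fin (n + 1)}
    (h : a < π x) :
    ∃ i, (π.symm a).succAbove i = x ∧ (eraseValue π a i).succ = π x := by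
  obtain ⟨i, rfl⟩ : ∃ i, (π.symm a).succAbove i = x :=
    Fin.exists_succAbove_eq fun hx => h.ne' (π.eq_symm_apply.mp hx)
  rw [← succAbove_eraseValue, Fin.lt_succAbove_iff_le_castSucc] at h
  exact ⟨i, rfl, by rw [← succAbove_eraseValue, Fin.succAbove_of_le_castSucc _ _ h]⟩

theorem IsSepPair.eraseValue {π : Equiv.Perm (Fin (n + 1))} {a : Fin (n + 1)} {w : Fin n}
    (hsep : IsSepPair π w.succ) (haw : a ≤ w.castSucc) : IsSepPair (eraseValue π a) w := by
  obtain ⟨p, q, r, hpq, hqr, hp, hq, hr⟩ := hsep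
  have hr_gt : a < π r := hr ▸ haw.trans_lt w.castSucc_lt_succ
  have hp_gt : a < π p := hr_gt.trans (by rw [Fin.lt_def, hp, hr]; exact Nat.lt_succ_self _)
  have hq_gt : a < π q := hp_gt.trans (by rwa [Fin.lt_def, hp])
  obtain ⟨p, rfl, hp'⟩ := exists_succ_eraseValue_eq hp_gt
  obtain ⟨q, rfl, hq'⟩ := exists_succ_eraseValue_eq hq_gt
  obtain ⟨r, rfl, hr'⟩ := exists_succ_eraseValue_eq hr_gt
  rw [← hp', Fin.val_succ, Fin.val_succ, Nat.add_right_cancel_iff] at hp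
  rw [← hq', Fin.val_succ, Fin.val_succ, Nat.add_lt_add_iff_right] at hq
  exact ⟨p, q, r, Fin.succAbove_lt_succAbove_iff.mp hpq, Fin.succAbove_lt_succAbove_iff.mp hqr,
    hp, hq, Fin.succ_injective _ (hr'.trans hr)⟩

theorem sep_le_sep_eraseValue_zero_add_one (π : Equiv.Perm (Fin (n + 1))) :
    sep π ≤ sep (eraseValue π 0) + 1 := by
  have hsub : {v | IsSepPair π v} ⊆ insert 0 (Fin.succ '' {w | IsSepPair (eraseValue π 0) w}) := by
    intro v hv
    cases v using Fin.cases with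
    | zero => exact Set.mem_insert _ _
    | succ w => exact Or.inr ⟨w, hv.eraseValue (Fin.zero_le _), rfl⟩
  calc sep π
      ≤ (insert 0 (Fin.succ '' {w | IsSepPair (eraseValue π 0) w})).ncard :=
        Set.ncard_le_ncard hsub
    _ ≤ (Fin.succ '' {w | IsSepPair (eraseValue π 0) w}).ncard + 1 := Set.ncard_insert_le _ _
    _ = sep (eraseValue π 0) + 1 := by
        rw [Set.ncard_image_of_injective _ (Fin.succ_injective n), sep]

theorem sep_le_tau (π : Equiv.Perm (Fin n)) : sep π ≤ tau n :=
  Finset.le_sup (f := fun σ : Equiv.Perm (Fin n) => sep σ) (Finset.mem_univ π)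

end EraseValue

/-- For every positive `n`, `τ(n+1) ≤ τ(n) + 1`. -/
theorem tau_succ_le (n : ℕ) (hn : 1 ≤ n) : tau (n + 1) ≤ tau n + 1 := by
  refine Finset.sup_le fun π _ => ?_
  calc sep π ≤ sep (eraseValue π 0) + 1 := sep_le_sep_eraseValue_zero_add_one π
    _ ≤ tau n + 1 := Nat.add_le_add_right (sep_le_tau _) 1
end

section
/- For every positive integer n and every integer k ≥ 1, the number of permutations of length n that are sortable by at most k passes through the stack equals Σ_{j=0}^{k−1} T(n,j); i.e. #{π ∈ S_n : sep(π) ≤ k−1} = Σ_{j=0}^{k−1} T(n,j). -/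
/-- `T n t` is the number of Parker sequences of length `n` (tuples
`(a₁,…,aₙ)` with `1 ≤ aᵢ ≤ i`, here `0`-indexed) with exactly `t` descents. -/
noncomputable def T (n t : ℕ) : ℕ :=
  Nat.card {a : Fin n → ℕ //
    (∀ i : Fin n, 1 ≤ a i ∧ a i ≤ (i : ℕ) + 1) ∧
    {i : Fin n | ∃ h : (i : ℕ) + 1 < n, a i > a ⟨(i : ℕ) + 1, h⟩}.ncard = t}

open Finset

section NonInversions

variable {α β : Type*} [LinearOrder α] [LocallyFiniteOrderTop α] [LinearOrder β]

/-- The right ends of the non-inversions of `f` with left end `i`. For `f = π⁻¹` these are the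
values larger than `i` that stand to the right of `i` in the one-line notation of `π`. -/
def nonInversions (f : α → β) (i : α) : Finset α :=
  {j ∈ Ioi i | f i < f j}

@[simp]
lemma mem_nonInversions {f : α → β} {i j : α} : j ∈ nonInversions f i ↔ i < j ∧ f i < f j := by
  simp [nonInversions]

lemma card_nonInversions_le (f : α → β) (i : α) : #(nonInversions f i) ≤ #(Ioi i) :=
  card_filter_le _ _

lemma card_nonInversions_lt_iff_of_covBy (f : α → β) {i j : α} (hij : i ⋖ j) :
    #(nonInversions f i) < #(nonInversions f j) ↔ ∃ k, j < k ∧ f j < f k ∧ f k ≤ f i := by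
  constructor
  · intro hcard
    obtain ⟨k, hkj, hki⟩ := exists_mem_notMem_of_card_lt_card hcard
    rw [mem_nonInversions] at hkj hki
    exact ⟨k, hkj.1, hkj.2, not_lt.1 fun hik ↦ hki ⟨hij.lt.trans hkj.1, hik⟩⟩
  · rintro ⟨k, hjk, hfjk, hfki⟩
    have hfji : f j < f i := hfjk.trans_le hfki
    refine card_lt_card ((ssubset_iff_of_subset fun l hl ↦ ?_).2 ⟨k, ?_, ?_⟩)
    · rw [mem_nonInversions] at hl ⊢
      have hlj : l ≠ j := by
        rintro rfl
        exact hfji.not_gt hl.2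
      exact ⟨(hij.ge_of_gt hl.1).lt_of_ne' hlj, hfji.trans hl.2⟩
    · exact mem_nonInversions.2 ⟨hjk, hfjk⟩
    · exact fun hk ↦ hfki.not_gt (mem_nonInversions.1 hk).2

lemma lt_iff_lt_of_nonInversions_eq {f g : α → β} (hf : f.Injective) (hg : g.Injective) {i j : α}
    (hi : nonInversions f i = nonInversions g i) (hj : nonInversions f j = nonInversions g j) :
    f i < f j ↔ g i < g j := by
  have lt_iff {a b : α} (hab : a < b) (h : nonInversions f a = nonInversions g a) :
      f a < f b ↔ g a < g b := by
    simpa [hab] using congrArg (b ∈ ·) h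
  obtain hij | rfl | hji := lt_trichotomy i j
  · exact lt_iff hij hi
  · simp
  · rw [← not_iff_not, not_lt, not_lt, (hf.ne hji.ne).le_iff_lt, (hg.ne hji.ne).le_iff_lt]
    exact lt_iff hji hj

/-- The two sets are upper sets for the common order that `f` and `g` induce on `Ioi i`, so one
contains the other. -/
lemma nonInversions_eq_of_card_eq {f g : α → β} {i : α}
    (hlt : ∀ j > i, ∀ k > i, f j < f k ↔ g j < g k)
    (hcard : #(nonInversions f i) = #(nonInversions g i)) :
    nonInversions f i = nonInversions g i := by
  have hnested : nonInversions f i ⊆ nonInversions g i ∨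
      nonInversions g i ⊆ nonInversions f i := by
    by_contra! hnot
    obtain ⟨⟨j, hjf, hjg⟩, k, hkg, hkf⟩ := hnot.imp not_subset.1 not_subset.1
    simp only [mem_nonInversions, not_and, not_lt] at hjf hjg hkg hkf
    have hf : f k < f j := (hkf hkg.1).trans_lt hjf.2
    have hg : g j < g k := (hjg hjf.1).trans_lt hkg.2
    exact hg.not_gt ((hlt k hkg.1 j hjf.1).1 hf)
  obtain hfg | hgf := hnested
  · exact eq_of_subset_of_card_le hfg hcard.ge
  · exact (eq_of_subset_of_card_le hgf hcard.le).symm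

lemma nonInversions_eq_of_forall_card_eq [WellFoundedGT α] {f g : α → β} (hf : f.Injective)
    (hg : g.Injective) (hcard : ∀ i, #(nonInversions f i) = #(nonInversions g i)) (i : α) :
    nonInversions f i = nonInversions g i := by
  induction i using WellFoundedGT.induction with
  | ind i ih =>
    exact nonInversions_eq_of_card_eq
      (fun j hj k hk ↦ lt_iff_lt_of_nonInversions_eq hf hg (ih j hj) (ih k hk)) (hcard i)

end NonInversions

lemma equiv_eq_of_forall_lt_iff_lt {α β : Type*} [LinearOrder β] [WellFoundedLT β] {σ τ : α ≃ β}
    (h : ∀ i j, σ i < σ j ↔ τ i < τ j) : σ = τ := by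
  have hmono : StrictMono (τ ∘ σ.symm) := fun x y hxy ↦ (h _ _).1 (by simpa using hxy)
  have hid : τ ∘ σ.symm = id := (hmono.range_inj strictMono_id).1 (by simp)
  ext i
  simpa using (congrFun hid (σ i)).symm

lemma equiv_eq_of_forall_card_nonInversions_eq {α β : Type*} [LinearOrder α]
    [LocallyFiniteOrderTop α] [WellFoundedGT α] [LinearOrder β] [WellFoundedLT β] {σ τ : α ≃ β}
    (h : ∀ i, #(nonInversions σ i) = #(nonInversions τ i)) : σ = τ := by
  have heq := nonInversions_eq_of_forall_card_eq σ.injective τ.injective h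
  exact equiv_eq_of_forall_lt_iff_lt fun i j ↦
    lt_iff_lt_of_nonInversions_eq σ.injective τ.injective (heq i) (heq j)

/-- The Parker sequences of length `n`, with positions indexed from `0` as in `T`. -/
def parkerSequences (n : ℕ) : Finset (Fin n → ℕ) :=
  Fintype.piFinset fun i ↦ Icc 1 ((i : ℕ) + 1)

lemma mem_parkerSequences {n : ℕ} {a : Fin n → ℕ} :
    a ∈ parkerSequences n ↔ ∀ i : Fin n, 1 ≤ a i ∧ a i ≤ (i : ℕ) + 1 := by
  simp [parkerSequences]

lemma card_parkerSequences (n : ℕ) : #(parkerSequences n) = n.factorial := by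
  simp only [parkerSequences, Fintype.card_piFinset, Nat.card_Icc, Nat.add_sub_cancel]
  rw [Fin.prod_univ_eq_prod_range (· + 1) n, prod_range_add_one_eq_factorial]

/-- The descents of a finite sequence, a descent being recorded by its left position. -/
def descentSet {n : ℕ} (a : Fin n → ℕ) : Set (Fin n) :=
  {i | ∃ h : (i : ℕ) + 1 < n, a i > a ⟨(i : ℕ) + 1, h⟩}

lemma T_eq_card_filter_descentSet (n t : ℕ) :
    T n t = #{a ∈ parkerSequences n | (descentSet a).ncard = t} :=
  Nat.subtype_card _ fun a ↦ by rw [mem_filter, mem_parkerSequences, descentSet]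

/-- The Lehmer code of `π⁻¹`, in the variant that counts non-inversions; values are read from the
largest to the smallest and the entries are shifted by `1`, to match `parkerSequences`. -/
def parkerCode {n : ℕ} (π : Equiv.Perm (Fin n)) (i : Fin n) : ℕ :=
  #(nonInversions π.symm i.rev) + 1

lemma parkerCode_mem_parkerSequences {n : ℕ} (π : Equiv.Perm (Fin n)) :
    parkerCode π ∈ parkerSequences n := by
  refine mem_parkerSequences.2 fun i ↦ ⟨Nat.le_add_left 1 _, Nat.succ_le_succ ?_⟩
  calc #(nonInversions π.symm i.rev) ≤ #(Ioi i.rev) := card_nonInversions_le _ _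
    _ = i := by rw [Fin.card_Ioi, Fin.val_rev]; lia

lemma parkerCode_injective (n : ℕ) : (parkerCode (n := n)).Injective := by
  intro π ρ h
  refine Equiv.symm_bijective.injective (equiv_eq_of_forall_card_nonInversions_eq fun v ↦ ?_)
  simpa [parkerCode] using congrFun h v.rev

lemma parkerCode_surjOn (n : ℕ) :
    Set.SurjOn parkerCode (Set.univ : Set (Equiv.Perm (Fin n))) (parkerSequences n) := by
  rw [← coe_univ]
  exact surjOn_of_injOn_of_card_le _ (fun π _ ↦ parkerCode_mem_parkerSequences π)
    (parkerCode_injective n).injOn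
    (by rw [card_parkerSequences, card_univ, Fintype.card_perm, Fintype.card_fin])

lemma isSepPair_castSucc_iff {m : ℕ} (π : Equiv.Perm (Fin (m + 1))) (j : Fin m) :
    IsSepPair π j.castSucc ↔
      #(nonInversions π.symm j.castSucc) < #(nonInversions π.symm j.succ) := by
  rw [card_nonInversions_lt_iff_of_covBy _ (by simp [Fin.covBy_iff])]
  constructor
  · rintro ⟨p, q, r, hpq, hqr, hp, hq, hr⟩
    have hp_symm : π.symm j.succ = p := π.symm_apply_eq.2 (Fin.ext hp.symm)
    have hr_symm : π.symm j.castSucc = r := π.symm_apply_eq.2 hr.symm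
    exact ⟨π q, hq, by simpa [hp_symm] using hpq, by simpa [hr_symm] using hqr.le⟩
  · rintro ⟨w, hw, hpq, hqr⟩
    have hne : π.symm w ≠ π.symm j.castSucc :=
      π.symm.injective.ne (j.castSucc_lt_succ.trans hw).ne'
    exact ⟨π.symm j.succ, π.symm w, π.symm j.castSucc, hpq, hqr.lt_of_ne hne, by simp,
      by simpa [Fin.lt_def] using hw, by simp⟩

lemma not_isSepPair_last {m : ℕ} (π : Equiv.Perm (Fin (m + 1))) : ¬IsSepPair π (Fin.last m) := by
  rintro ⟨-, q, -, -, -, -, hq, -⟩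
  exact (π q).isLt.not_gt hq

lemma setOf_isSepPair {m : ℕ} (π : Equiv.Perm (Fin (m + 1))) :
    {v | IsSepPair π v} = Fin.castSucc ''
      {j : Fin m | #(nonInversions π.symm j.castSucc) < #(nonInversions π.symm j.succ)} := by
  ext v
  cases v using Fin.lastCases with
  | last => simp [not_isSepPair_last]
  | cast j => simp [isSepPair_castSucc_iff]

lemma descentSet_eq_image_castSucc {m : ℕ} (a : Fin (m + 1) → ℕ) :
    descentSet a = Fin.castSucc '' {j : Fin m | a j.succ < a j.castSucc} := by
  ext i
  cases i using Fin.lastCases with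
  | last => simp [descentSet]
  | cast j => simp [descentSet, Fin.succ]

lemma sep_eq_ncard_descentSet {n : ℕ} (π : Equiv.Perm (Fin n)) :
    sep π = (descentSet (parkerCode π)).ncard := by
  cases n with
  | zero => simp only [sep, Set.eq_empty_of_isEmpty]
  | succ m =>
    rw [sep, setOf_isSepPair, descentSet_eq_image_castSucc,
      Set.ncard_image_of_injective _ (Fin.castSucc_injective m),
      Set.ncard_image_of_injective _ (Fin.castSucc_injective m),
      ← Set.ncard_image_of_injective _ Fin.rev_injective]
    congr 1
    ext j
    simp [parkerCode, Fin.rev_succ, Fin.rev_castSucc]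

lemma T_eq_card_filter_sep (n t : ℕ) : T n t = #{π : Equiv.Perm (Fin n) | sep π = t} := by
  rw [T_eq_card_filter_descentSet]
  symm
  refine card_nbij parkerCode (fun π hπ ↦ ?_) (parkerCode_injective n).injOn fun a ha ↦ ?_
  · simpa [parkerCode_mem_parkerSequences, ← sep_eq_ncard_descentSet] using hπ
  · obtain ⟨ha, hdesc⟩ := mem_filter.1 ha
    obtain ⟨π, -, rfl⟩ := parkerCode_surjOn n ha
    exact ⟨π, by simpa [sep_eq_ncard_descentSet] using hdesc, rfl⟩

/-- The number of permutations of length `n` sortable in at most `k` passes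
(i.e. with at most `k - 1` separated pairs) is `∑_{j=0}^{k-1} T(n,j)`. -/
theorem card_k_pass_sortable (n k : ℕ) (hn : 1 ≤ n) (hk : 1 ≤ k) :
    Nat.card {π : Equiv.Perm (Fin n) // sep π ≤ k - 1} =
      ∑ j ∈ Finset.range k, T n j := by
  calc Nat.card {π : Equiv.Perm (Fin n) // sep π ≤ k - 1}
      = #{π : Equiv.Perm (Fin n) | sep π < k} :=
        Nat.subtype_card _ fun π ↦ by simp only [mem_filter_univ]; lia
    _ = ∑ j ∈ range k, #{π ∈ {π : Equiv.Perm (Fin n) | sep π < k} | sep π = j} :=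
        card_eq_sum_card_fiberwise fun π hπ ↦ by simpa using hπ
    _ = ∑ j ∈ range k, T n j := by
        refine sum_congr rfl fun j hj ↦ ?_
        rw [T_eq_card_filter_sep, filter_filter]
        have hjk := mem_range.1 hj
        congr! 2 with π
        lia
end
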